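/- Let R = 𝔽₂[x₁, …, x_s] with Steenrod operations determined by Sq(x_i) = x_i + x_i². For 1 ≤ j ≤ s, the class S_j Sq¹(x₁⋯x_s) := Sq^{2^j−1} ⋯ Sq^7 Sq^3 Sq^1 (x₁ ⋯ x_s) is nonzero; in fact the monomial x₁^{2^j} x₂^{2^{j−1}} ⋯ x_j² x_{j+1} ⋯ x_s occurs with coefficient 1 in it. -/

import Mathlib

open MvPolynomial

/-- The total Steenrod operation on `𝔽₂[x₁,…,x_s]`, the ring endomorphism
with `Sq(x_i) = x_i + x_i²`. -/
noncomputable def totalSq (s : ℕ) :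
    MvPolynomial (Fin s) (ZMod 2) →ₐ[ZMod 2] MvPolynomial (Fin s) (ZMod 2) :=
  aeval (fun i => X i + X i ^ 2)

/-- Apply `Sq^n` to a pair (homogeneous class, its degree): for `f` of degree `d`,
`Sq^n f` is the degree `d + n` component of `Sq f`. -/
noncomputable def applySq (s n : ℕ) (p : MvPolynomial (Fin s) (ZMod 2) × ℕ) :
    MvPolynomial (Fin s) (ZMod 2) × ℕ :=
  (homogeneousComponent (p.2 + n) (totalSq s p.1), p.2 + n)

/-- `S_j Sq¹ (x₁⋯x_s) = Sq^{2^j−1} ⋯ Sq^7 Sq^3 Sq^1 (x₁⋯x_s)`, obtained by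
applying `Sq^{2^i−1}` successively for `i = 1, …, j` to the product of the
variables (which has degree `s`). -/
noncomputable def SjSq1 (s j : ℕ) : MvPolynomial (Fin s) (ZMod 2) × ℕ :=
  (List.range j).foldl (fun p i => applySq s (2 ^ (i + 1) - 1) p)
    (∏ i : Fin s, X i, s)

/-- Target exponents. -/
def expo (s k : ℕ) (i : Fin s) : ℕ := if (i : ℕ) < k then 2 ^ (k - (i : ℕ)) else 1

/-- Increment of the exponents. -/
def incr (s k : ℕ) (i : Fin s) : ℕ := if (i : ℕ) < k + 1 then 2 ^ (k - (i : ℕ)) else 0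

/-- Exponents doubled on `T`. -/
noncomputable def dbl {s : ℕ} (n : Fin s →₀ ℕ) (T : Finset (Fin s)) : Fin s →₀ ℕ :=
  Finsupp.equivFunOnFinite.symm (fun i => n i + if i ∈ T then n i else 0)

lemma expo_succ (s k : ℕ) (i : Fin s) : expo s (k + 1) i = expo s k i + incr s k i := by
  unfold expo incr
  rcases lt_trichotomy (i : ℕ) k with h | h | h
  · rw [if_pos (by omega), if_pos h, if_pos (by omega), show k + 1 - (i : ℕ) = (k - i) + 1 by omega]
    ring
  · subst h; simp
  · rw [if_neg (by omega), if_neg (by omega), if_neg (by omega)]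

lemma sum_incr (s k : ℕ) (h : k + 1 ≤ s) : ∑ i, incr s k i = 2 ^ (k + 1) - 1 := by
  unfold incr
  rw [Fin.sum_univ_eq_sum_range (fun i => if i < k + 1 then 2 ^ (k - i) else 0) s,
    ← Finset.sum_filter]
  have : (Finset.range s).filter (fun i => i < k + 1) = Finset.range (k + 1) := by
    ext i; simp; omega
  rw [this]
  have := Finset.sum_range_reflect (fun i => 2 ^ i) (k + 1)
  simp only [Nat.add_sub_cancel] at this
  have hg := Nat.geomSum_eq (le_refl 2) (k + 1)
  simp only [Nat.add_one_sub_one, Nat.div_one] at hg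
  rw [← hg, ← this]

lemma key {s k : ℕ} (hk : k + 1 ≤ s) (n : Fin s →₀ ℕ) (T : Finset (Fin s))
    (hn : ∑ i, n i = ∑ i, expo s k i)
    (hE : ∀ i, n i + (if i ∈ T then n i else 0) = expo s (k + 1) i) :
    (∀ i, n i = expo s k i) ∧ T = Finset.univ.filter (fun i : Fin s => (i : ℕ) < k + 1) := by
  have hle : ∀ i ∈ Finset.univ, (if i ∈ T then n i else 0) ≤ incr s k i := by
    intro i _
    have h := hE i
    split_ifs at h ⊢ with hT
    · unfold expo at h
      unfold incr
      split_ifs at h ⊢ with h1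
      · rw [show k + 1 - (i : ℕ) = (k - i) + 1 by omega, pow_succ] at h
        omega
      · omega
    · exact Nat.zero_le _
  have hsum : ∑ i, (if i ∈ T then n i else 0) = ∑ i, incr s k i := by
    have h1 : ∑ i, (n i + (if i ∈ T then n i else 0)) = ∑ i, (expo s k i + incr s k i) :=
      Finset.sum_congr rfl (fun i _ => by rw [hE i, expo_succ])
    rw [Finset.sum_add_distrib, Finset.sum_add_distrib] at h1
    omega
  have heq := (Finset.sum_eq_sum_iff_of_le hle).1 hsum
  have hni : ∀ i, n i = expo s k i := by
    intro i
    have h1 := hE i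
    have h2 := heq i (Finset.mem_univ _)
    rw [expo_succ] at h1
    omega
  refine ⟨hni, ?_⟩
  ext i
  have h2 := heq i (Finset.mem_univ _)
  have h3 : 0 < n i := by
    rw [hni]; unfold expo; split_ifs <;> positivity
  simp only [Finset.mem_filter, Finset.mem_univ, true_and]
  unfold incr at h2
  have : 0 < 2 ^ (k - (i : ℕ)) := by positivity
  split_ifs at h2 with a b <;> simp_all

lemma totalSq_monomial {s : ℕ} (n : Fin s →₀ ℕ) (hn : ∀ i, ∃ a, n i = 2 ^ a) (c : ZMod 2) :
    totalSq s (monomial n c) = ∑ T : Finset (Fin s), monomial (dbl n T) c := by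
  have h1 : totalSq s (monomial n c) = C c * ∏ i, ((X i : MvPolynomial (Fin s) (ZMod 2)) ^ (2 * n i) + X i ^ n i) := by
    unfold totalSq
    rw [aeval_monomial, Finsupp.prod_fintype _ _ (by simp)]
    congr 1
    refine Finset.prod_congr rfl (fun i _ => ?_)
    obtain ⟨a, ha⟩ := hn i
    rw [ha, add_pow_char_pow, ← pow_mul, add_comm]
  rw [h1, Finset.prod_add, Finset.mul_sum, Finset.powerset_univ]
  refine Finset.sum_congr rfl (fun T _ => ?_)
  rw [monomial_eq, Finsupp.prod_fintype _ _ (by simp)]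
  congr 1
  rw [← Finset.prod_mul_prod_compl T, ← Finset.compl_eq_univ_sdiff]
  congr 1
  · refine Finset.prod_congr rfl (fun i hi => ?_)
    simp [dbl, hi, two_mul]
  · refine Finset.prod_congr rfl (fun i hi => ?_)
    rw [Finset.mem_compl] at hi
    simp [dbl, hi]

lemma coeff_totalSq {s : ℕ} (f : MvPolynomial (Fin s) (ZMod 2))
    (hf : ∀ n ∈ f.support, ∀ i, ∃ a, n i = 2 ^ a) (m : Fin s →₀ ℕ) :
    coeff m (totalSq s f) =
      ∑ n ∈ f.support, ∑ T : Finset (Fin s), if dbl n T = m then coeff n f else 0 := by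
  conv_lhs => rw [f.as_sum]
  rw [map_sum, coeff_sum]
  refine Finset.sum_congr rfl (fun n hn => ?_)
  rw [totalSq_monomial n (hf n hn), coeff_sum]
  simp [coeff_monomial]

lemma SjSq1_succ (s k : ℕ) : SjSq1 s (k + 1) = applySq s (2 ^ (k + 1) - 1) (SjSq1 s k) := by
  simp [SjSq1, List.range_succ]

lemma inv (s k : ℕ) (hk : k ≤ s) :
    (SjSq1 s k).1.IsHomogeneous (SjSq1 s k).2 ∧
    (∀ n ∈ (SjSq1 s k).1.support, ∀ i, ∃ a, n i = 2 ^ a) ∧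
    (SjSq1 s k).2 = ∑ i, expo s k i ∧
    coeff (Finsupp.equivFunOnFinite.symm (expo s k)) (SjSq1 s k).1 = 1 := by
  induction k with
  | zero =>
    have h0 : (∏ i : Fin s, X i : MvPolynomial (Fin s) (ZMod 2)) =
        monomial (Finsupp.equivFunOnFinite.symm (expo s 0)) 1 := by
      rw [monomial_eq, Finsupp.prod_fintype _ _ (by simp)]
      simp [expo]
    have h1 : SjSq1 s 0 = (monomial (Finsupp.equivFunOnFinite.symm (expo s 0)) 1, s) := by
      rw [← h0]; rfl
    rw [h1]
    refine ⟨?_, ?_, ?_, ?_⟩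
    · apply isHomogeneous_monomial
      simp [Finsupp.degree_eq_sum, expo]
    · intro n hn i
      have := Finset.mem_singleton.1 (support_monomial_subset hn)
      subst this
      exact ⟨0, by simp [expo]⟩
    · simp [expo]
    · simp
  | succ k ih =>
    obtain ⟨hh, hp, hd, hc⟩ := ih (by omega)
    rw [SjSq1_succ]
    generalize SjSq1 s k = p at *
    obtain ⟨f, d⟩ := p
    simp only [applySq] at *
    have hd' : d + (2 ^ (k + 1) - 1) = ∑ i, expo s (k + 1) i := by
      rw [← sum_incr s k hk, hd, ← Finset.sum_add_distrib]
      exact Finset.sum_congr rfl (fun i _ => (expo_succ s k i).symm)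
    refine ⟨homogeneousComponent_isHomogeneous _ _, ?_, hd', ?_⟩
    · intro m hm i
      rw [mem_support_iff, coeff_homogeneousComponent] at hm
      split_ifs at hm with h
      · rw [coeff_totalSq f hp] at hm
        obtain ⟨n, hn, hm⟩ := Finset.exists_ne_zero_of_sum_ne_zero hm
        obtain ⟨T, _, hm⟩ := Finset.exists_ne_zero_of_sum_ne_zero hm
        split_ifs at hm with hE
        · obtain ⟨a, ha⟩ := hp n hn i
          rw [← hE]
          by_cases hi : i ∈ T
          · exact ⟨a + 1, by simp [dbl, hi, ha]; ring⟩
          · exact ⟨a, by simp [dbl, hi, ha]⟩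
        · exact absurd rfl hm
      · exact absurd rfl hm
    · rw [coeff_homogeneousComponent, if_pos (by simp [Finsupp.degree_eq_sum, hd']),
        coeff_totalSq f hp]
      have hkey : ∀ n ∈ f.support, ∀ T, dbl n T = Finsupp.equivFunOnFinite.symm (expo s (k + 1)) →
          n = Finsupp.equivFunOnFinite.symm (expo s k) ∧
            T = Finset.univ.filter (fun i : Fin s => (i : ℕ) < k + 1) := by
        intro n hn T hE
        have h1 : n.degree = d := by
          have := hh (mem_support_iff.1 hn)
          rw [Finsupp.degree_eq_weight_one]; exact this
        rw [Finsupp.degree_eq_sum] at h1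
        obtain ⟨h2, h3⟩ := key hk n T (h1.trans hd) (fun i => by
          have := DFunLike.congr_fun hE i
          simpa [dbl] using this)
        exact ⟨by ext i; simp [h2], h3⟩
      rw [Finset.sum_eq_single (Finsupp.equivFunOnFinite.symm (expo s k)),
        Finset.sum_eq_single (Finset.univ.filter (fun i : Fin s => (i : ℕ) < k + 1)), if_pos, hc]
      · ext i
        simp only [dbl, Finsupp.equivFunOnFinite_symm_apply_apply, expo_succ, Finset.mem_filter,
          Finset.mem_univ, true_and]
        congr 1
        unfold incr expo
        split_ifs with h1 h2
        · rfl
        · rw [show k - (i : ℕ) = 0 by omega, pow_zero]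
        · rfl
      · intro T _ hT
        rw [if_neg]
        exact fun hE => hT (hkey _ (by rw [mem_support_iff, hc]; exact one_ne_zero) T hE).2
      · simp
      · intro n hn hne
        refine Finset.sum_eq_zero (fun T _ => if_neg (fun hE => hne (hkey n hn T hE).1))
      · intro h
        rw [mem_support_iff, hc] at h
        exact absurd one_ne_zero h

/-- Lemma 4.1 of Benoist–Ottem: for `1 ≤ j ≤ s`, the monomial
`x₁^{2^j} x₂^{2^{j−1}} ⋯ x_j² x_{j+1} ⋯ x_s` occurs with coefficient `1`
in `S_j Sq¹(x₁⋯x_s)`; in particular this class is nonzero. -/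
theorem stmt_3 (s j : ℕ) (hj : 1 ≤ j) (hjs : j ≤ s) :
    coeff (Finsupp.equivFunOnFinite.symm
        fun i : Fin s => if (i : ℕ) < j then 2 ^ (j - (i : ℕ)) else 1)
      (SjSq1 s j).1 = 1 ∧ (SjSq1 s j).1 ≠ 0 := by
  have h := (inv s j hjs).2.2.2
  refine ⟨h, fun h0 => ?_⟩
  rw [h0, coeff_zero] at h
  exact zero_ne_one h
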